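/- Let Δt > 0, b > 0 and h_min ∈ ℝ. For v ≥ 0 let V_v be the clamped braking velocity sequence V_v(0) = v, V_v(k+1) = max(0, V_v(k) − b·Δt), and let D_v(k) := Δt · Σ_{j=0}^{k−1} (V_v(j) + V_v(j+1))/2. Suppose a lead vehicle with initial velocity v_l ≥ 0 and a following vehicle with initial velocity v_f satisfying 0 ≤ v_f ≤ v_l both brake at maximum deceleration, so the headway after k steps is h(k) := h(0) + D_{v_l}(k) − D_{v_f}(k). If h(0) ≥ h_min, then h(k) is nondecreasing in k and h(k) ≥ h_min for all k ∈ ℕ; in particular, any state (h, v_f, v_l) with v_f ≤ v_l and h ≥ h_min belongs to the safe set C := {(h, v_f, v_l) : ∀k ∈ ℕ, h + D_{v_l}(k) − D_{v_f}(k) ≥ h_min}. -/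

import Mathlib

/-- The clamped braking velocity sequence: `V_v(0) = v`, `V_v(k+1) = max(0, V_v(k) − b·Δt)`. -/
def clampedBrake (b Δt v : ℝ) : ℕ → ℝ
  | 0 => v
  | k + 1 => max 0 (clampedBrake b Δt v k - b * Δt)

/-- The braking displacement after `k` steps: `D_v(k) = Δt · Σ_{j<k} (V_v(j) + V_v(j+1))/2`. -/
noncomputable def brakeDisp (b Δt v : ℝ) (k : ℕ) : ℝ :=
  Δt * ∑ j ∈ Finset.range k, (clampedBrake b Δt v j + clampedBrake b Δt v (j + 1)) / 2

section Braking

variable {b Δt : ℝ}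

theorem monotone_clampedBrake (k : ℕ) : Monotone fun v => clampedBrake b Δt v k := by
  intro v w hvw
  induction k with
  | zero => exact hvw
  | succ k ih => exact max_le_max_left 0 (sub_le_sub_right ih (b * Δt))

@[simp]
theorem brakeDisp_zero (v : ℝ) : brakeDisp b Δt v 0 = 0 := by
  simp [brakeDisp]

theorem brakeDisp_succ (v : ℝ) (k : ℕ) :
    brakeDisp b Δt v (k + 1) =
      brakeDisp b Δt v k + Δt * ((clampedBrake b Δt v k + clampedBrake b Δt v (k + 1)) / 2) := by
  simp only [brakeDisp, Finset.sum_range_succ, mul_add]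

theorem monotone_brakeDisp_succ_sub (hΔt : 0 ≤ Δt) (k : ℕ) :
    Monotone fun v => brakeDisp b Δt v (k + 1) - brakeDisp b Δt v k := by
  intro v w hvw
  simp only [brakeDisp_succ, add_sub_cancel_left]
  gcongr
  · exact monotone_clampedBrake k hvw
  · exact monotone_clampedBrake (k + 1) hvw

theorem monotone_brakeDisp_sub_brakeDisp (hΔt : 0 ≤ Δt) {v w : ℝ} (hvw : v ≤ w) :
    Monotone fun k => brakeDisp b Δt w k - brakeDisp b Δt v k := by
  refine monotone_nat_of_le_succ fun k => ?_
  have increment_le : brakeDisp b Δt v (k + 1) - brakeDisp b Δt v k ≤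
      brakeDisp b Δt w (k + 1) - brakeDisp b Δt w k :=
    monotone_brakeDisp_succ_sub hΔt k hvw
  linarith

end Braking

/-- If a lead vehicle with initial velocity `v_l` and a follower with initial velocity
`v_f`, with `0 ≤ v_f ≤ v_l`, both brake at the maximum rate, then the headway
`h(k) = h(0) + D_{v_l}(k) − D_{v_f}(k)` is nondecreasing in `k`; hence if `h(0) ≥ h_min`
then `h(k) ≥ h_min` for all `k`, i.e. the state belongs to the safe set `C`. -/
theorem headway_stays_safe_of_slower_follower
    (Δt b hmin : ℝ) (hΔt : 0 < Δt) (hb : 0 < b)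
    (vf vl h0 : ℝ) (hvf : 0 ≤ vf) (hvfl : vf ≤ vl) (hh0 : hmin ≤ h0) :
    Monotone (fun k : ℕ => h0 + brakeDisp b Δt vl k - brakeDisp b Δt vf k) ∧
      ∀ k : ℕ, hmin ≤ h0 + brakeDisp b Δt vl k - brakeDisp b Δt vf k := by
  have headway_mono : Monotone fun k : ℕ => h0 + brakeDisp b Δt vl k - brakeDisp b Δt vf k := by
    simpa only [add_sub_assoc] using
      (monotone_brakeDisp_sub_brakeDisp hΔt.le hvfl).const_add h0
  refine ⟨headway_mono, fun k => ?_⟩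
  calc
    hmin ≤ h0 := hh0
    _ = h0 + brakeDisp b Δt vl 0 - brakeDisp b Δt vf 0 := by simp
    _ ≤ h0 + brakeDisp b Δt vl k - brakeDisp b Δt vf k := headway_mono k.zero_le
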